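/- Let (Ω_i, μ_i) (i = 1,…,d) be σ-finite measure spaces with product Ω, let p⃗ = (p₁,…,p_d) with 0 < p_i ≤ ∞, and let 0 < q₁ ≤ q₂ ≤ ∞. Then L_{p⃗,q₁} ↪ L_{p⃗,q₂}: in fact ‖f‖_{L_{p⃗,∞}} ≤ q₁^{1/q₁} ‖f‖_{L_{p⃗,q₁}} for all measurable f, and if q₁ < q₂ < ∞ then ‖f‖_{L_{p⃗,q₂}} ≤ q₁^{(q₂−q₁)/(q₁ q₂)} ‖f‖_{L_{p⃗,q₁}} for all measurable f. -/

import Mathlib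

open MeasureTheory ENNReal Set Filter

noncomputable section

/-- One-variable `L_p` quasi-norm of an `ℝ≥0∞`-valued function (essential sup if `p = ∞`). -/
def lpNorm1 {α : Type} [MeasurableSpace α] (p : ℝ≥0∞) (μ : Measure α)
    (g : α → ℝ≥0∞) : ℝ≥0∞ :=
  if p = ∞ then essSup g μ else (∫⁻ x, g x ^ p.toReal ∂μ) ^ (1 / p.toReal)

/-- Mixed Lebesgue quasi-norm of an `ℝ≥0∞`-valued function on a product space:
the first coordinate is integrated innermost. -/
def mixedNormE : {d : ℕ} → {α : Fin d → Type} →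
    [inst : ∀ i, MeasurableSpace (α i)] → (μ : ∀ i, Measure (α i)) →
    (p : Fin d → ℝ≥0∞) → ((∀ i, α i) → ℝ≥0∞) → ℝ≥0∞
  | 0, _, _, _, _, f => f finZeroElim
  | (d + 1), α, inst, μ, p, f =>
      @mixedNormE d (fun i => α i.succ) (fun i => inst i.succ)
        (fun i => μ i.succ) (fun i => p i.succ)
        (fun y => lpNorm1 (p 0) (μ 0) fun x => f (Fin.cons x y))

/-- Mixed Lebesgue quasi-norm `‖f‖_{p⃗}` of a real-valued function. -/
def mixedNorm {d : ℕ} {α : Fin d → Type} [∀ i, MeasurableSpace (α i)]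
    (μ : ∀ i, Measure (α i)) (p : Fin d → ℝ≥0∞) (f : (∀ i, α i) → ℝ) : ℝ≥0∞ :=
  mixedNormE μ p fun x => ENNReal.ofReal |f x|

/-- Mixed Lorentz quasi-norm `‖f‖_{L_{p⃗,q}}`. -/
def mixedLorentzNorm {d : ℕ} {α : Fin d → Type} [∀ i, MeasurableSpace (α i)]
    (μ : ∀ i, Measure (α i)) (p : Fin d → ℝ≥0∞) (q : ℝ≥0∞) (f : (∀ i, α i) → ℝ) : ℝ≥0∞ :=
  if q = ∞ then
    ⨆ (u : ℝ) (_ : 0 < u),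
      ENNReal.ofReal u * mixedNorm μ p ({x | u < |f x|}.indicator fun _ => (1 : ℝ))
  else
    (∫⁻ u in Set.Ioi (0 : ℝ),
        (ENNReal.ofReal u * mixedNorm μ p ({x | u < |f x|}.indicator fun _ => (1 : ℝ))) ^ q.toReal
          / ENNReal.ofReal u) ^ (1 / q.toReal)

/-- Non-increasing rearrangement `f^*(t)` (with `inf ∅ = ∞`). -/
def rearr {α : Type} [MeasurableSpace α] (μ : Measure α) (f : α → ℝ) (t : ℝ) : ℝ≥0∞ :=
  sInf {s : ℝ≥0∞ | μ {x | s < ENNReal.ofReal |f x|} ≤ ENNReal.ofReal t}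

/-- Growth envelope function of the quasi-normed function space given by the quasi-norm `N`. -/
def growthEnv {α : Type} [MeasurableSpace α] (μ : Measure α)
    (N : (α → ℝ) → ℝ≥0∞) (t : ℝ) : ℝ≥0∞ :=
  ⨆ (f : α → ℝ) (_ : Measurable f) (_ : N f ≤ 1), rearr μ f t

/-- The Hardy-type functional `( ∫_0^ε ( t^{pinv} f^*(t) )^v dt/t )^{1/v}`,
with the usual `sup` modification for `v = ∞`. -/
def hardy {α : Type} [MeasurableSpace α] (μ : Measure α)
    (pinv : ℝ) (v : ℝ≥0∞) (ε : ℝ) (f : α → ℝ) : ℝ≥0∞ :=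
  if v = ∞ then ⨆ (t : ℝ) (_ : t ∈ Set.Ioo 0 ε), ENNReal.ofReal t ^ pinv * rearr μ f t
  else
    (∫⁻ t in Set.Ioo (0 : ℝ) ε,
        (ENNReal.ofReal t ^ pinv * rearr μ f t) ^ v.toReal / ENNReal.ofReal t) ^ (1 / v.toReal)

/-- The modular `ϱ_{p(·)}(f) = ∫ |f(x)|^{p(x)} dμ(x)`. -/
def varModular {α : Type} [MeasurableSpace α] (μ : Measure α)
    (p : α → ℝ) (f : α → ℝ) : ℝ≥0∞ :=
  ∫⁻ x, ENNReal.ofReal (|f x| ^ p x) ∂μ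

/-- The variable Lebesgue quasi-norm `‖f‖_{p(·)}`. -/
def varNorm {α : Type} [MeasurableSpace α] (μ : Measure α)
    (p : α → ℝ) (f : α → ℝ) : ℝ≥0∞ :=
  ⨅ (l : ℝ) (_ : 0 < l) (_ : varModular μ p (fun x => f x / l) ≤ 1), ENNReal.ofReal l

/-- The variable Lorentz quasi-norm `‖f‖_{L_{p(·),q}}`. -/
def varLorentzNorm {α : Type} [MeasurableSpace α] (μ : Measure α)
    (p : α → ℝ) (q : ℝ≥0∞) (f : α → ℝ) : ℝ≥0∞ :=
  if q = ∞ then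
    ⨆ (u : ℝ) (_ : 0 < u),
      ENNReal.ofReal u * varNorm μ p ({x | u < |f x|}.indicator fun _ => (1 : ℝ))
  else
    (∫⁻ u in Set.Ioi (0 : ℝ),
        (ENNReal.ofReal u * varNorm μ p ({x | u < |f x|}.indicator fun _ => (1 : ℝ))) ^ q.toReal
          / ENNReal.ofReal u) ^ (1 / q.toReal)

/-- Local log-Hölder continuity at a point `x₀`. -/
def LocLogHolderAt {E : Type} [PseudoMetricSpace E] (p : E → ℝ) (x₀ : E) : Prop :=
  ∃ C₀ > (0 : ℝ), ∀ x, dist x x₀ < 1 / 2 → |p x - p x₀| ≤ C₀ / (-Real.log (dist x x₀))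

/-- Local log-Hölder continuity (at every point, with a uniform constant). -/
def LocLogHolder {E : Type} [PseudoMetricSpace E] (p : E → ℝ) : Prop :=
  ∃ C₀ > (0 : ℝ), ∀ x y, dist x y < 1 / 2 → |p x - p y| ≤ C₀ / (-Real.log (dist x y))

end

/-!
Write `N u = ‖χ_{|f| > u}‖`, an antitone function of `u`, and `‖N‖_q` for the `L_q(du/u)` norm of
`u ↦ u * N u`. For `u < a` the integrand of `‖N‖_q` is at least `(u * N a) ^ q / u`, and integrating
this over `(0, a)` gives `(a * N a) ^ q / q`, whence the weak-type bound `‖N‖_∞ ≤ q^{1/q} ‖N‖_q`.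
The bound for finite exponents `q < r` follows by inserting it into `‖N‖_r^r ≤ ‖N‖_∞^{r-q} ‖N‖_q^q`.
-/

/-- The Lorentz quasi-norm of a distribution function `N`, i.e. the `L_q(du/u)` quasi-norm of
`u ↦ u * N u` on `(0, ∞)`. The mixed Lorentz quasi-norm of `f` is the case
`N u = ‖χ_{|f| > u}‖_{p⃗}`. For `q = ∞` the supremum is a genuine one, not an essential one. -/
noncomputable def lorentzFunctional (q : ℝ≥0∞) (N : ℝ → ℝ≥0∞) : ℝ≥0∞ :=
  if q = ∞ then ⨆ (u : ℝ) (_ : 0 < u), ENNReal.ofReal u * N u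
  else (∫⁻ u in Ioi (0 : ℝ), (ENNReal.ofReal u * N u) ^ q.toReal / ENNReal.ofReal u) ^
    (1 / q.toReal)

section LorentzFunctional

variable {q r : ℝ≥0∞} {N : ℝ → ℝ≥0∞}

theorem lorentzFunctional_top (N : ℝ → ℝ≥0∞) :
    lorentzFunctional ∞ N = ⨆ (u : ℝ) (_ : 0 < u), ENNReal.ofReal u * N u :=
  if_pos rfl

theorem ofReal_mul_le_lorentzFunctional_top (N : ℝ → ℝ≥0∞) {u : ℝ} (hu : 0 < u) :
    ENNReal.ofReal u * N u ≤ lorentzFunctional ∞ N :=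
  (le_iSup₂ (f := fun (u : ℝ) (_ : 0 < u) => ENNReal.ofReal u * N u) u hu).trans_eq
    (lorentzFunctional_top N).symm

theorem lorentzFunctional_rpow_toReal (hq₀ : q ≠ 0) (hq : q ≠ ∞) (N : ℝ → ℝ≥0∞) :
    lorentzFunctional q N ^ q.toReal =
      ∫⁻ u in Ioi (0 : ℝ), (ENNReal.ofReal u * N u) ^ q.toReal / ENNReal.ofReal u := by
  rw [lorentzFunctional, if_neg hq, one_div, ENNReal.rpow_inv_rpow (ENNReal.toReal_pos hq₀ hq).ne']

theorem setLIntegral_Ioo_ofReal_rpow_div {s a : ℝ} (hs : 0 < s) (ha : 0 ≤ a) :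
    ∫⁻ u in Ioo 0 a, ENNReal.ofReal u ^ s / ENNReal.ofReal u =
      ENNReal.ofReal a ^ s / ENNReal.ofReal s := by
  have integrable : IntegrableOn (fun u : ℝ => u ^ (s - 1)) (Ioo 0 a) :=
    (intervalIntegrable_iff_integrableOn_Ioo_of_le ha).1
      (intervalIntegral.intervalIntegrable_rpow' (by linarith))
  calc ∫⁻ u in Ioo 0 a, ENNReal.ofReal u ^ s / ENNReal.ofReal u
      = ∫⁻ u in Ioo 0 a, ENNReal.ofReal (u ^ (s - 1)) :=
        setLIntegral_congr_fun measurableSet_Ioo fun u hu => by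
          rw [ENNReal.ofReal_rpow_of_pos hu.1, ← ENNReal.ofReal_div_of_pos hu.1,
            Real.rpow_sub_one hu.1.ne']
    _ = ENNReal.ofReal (∫ u in Ioo 0 a, u ^ (s - 1)) :=
        (ofReal_integral_eq_lintegral_ofReal integrable <|
          ae_restrict_of_forall_mem measurableSet_Ioo fun u hu => Real.rpow_nonneg hu.1.le _).symm
    _ = ENNReal.ofReal (a ^ s / s) := by
        rw [← integral_Ioc_eq_integral_Ioo, ← intervalIntegral.integral_of_le ha,
          integral_rpow (Or.inl (by linarith)), sub_add_cancel, Real.zero_rpow hs.ne', sub_zero]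
    _ = ENNReal.ofReal a ^ s / ENNReal.ofReal s := by
        rw [ENNReal.ofReal_div_of_pos hs, ENNReal.ofReal_rpow_of_nonneg ha hs.le]

theorem ofReal_mul_rpow_le_of_antitoneOn {s a : ℝ} (hN : AntitoneOn N (Ioi 0)) (hs : 0 < s)
    (ha : 0 < a) :
    (ENNReal.ofReal a * N a) ^ s ≤
      ENNReal.ofReal s *
        ∫⁻ u in Ioi (0 : ℝ), (ENNReal.ofReal u * N u) ^ s / ENNReal.ofReal u := by
  have mul_rpow_div (u v : ℝ) : (ENNReal.ofReal u * N v) ^ s / ENNReal.ofReal u =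
      N v ^ s * (ENNReal.ofReal u ^ s / ENNReal.ofReal u) := by
    rw [ENNReal.mul_rpow_of_nonneg _ _ hs.le, mul_comm, mul_div_assoc]
  calc (ENNReal.ofReal a * N a) ^ s
      = ENNReal.ofReal s * (N a ^ s * (ENNReal.ofReal a ^ s / ENNReal.ofReal s)) := by
        rw [ENNReal.mul_rpow_of_nonneg _ _ hs.le, mul_left_comm,
          ENNReal.mul_div_cancel (ENNReal.ofReal_pos.2 hs).ne' ENNReal.ofReal_ne_top, mul_comm]
    _ = ENNReal.ofReal s *
          ∫⁻ u in Ioo 0 a, (ENNReal.ofReal u * N a) ^ s / ENNReal.ofReal u := by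
        simp only [mul_rpow_div]
        rw [lintegral_const_mul _ (by fun_prop), setLIntegral_Ioo_ofReal_rpow_div hs ha.le]
    _ ≤ ENNReal.ofReal s *
          ∫⁻ u in Ioo 0 a, (ENNReal.ofReal u * N u) ^ s / ENNReal.ofReal u := by
        gcongr ENNReal.ofReal s * ?_
        refine setLIntegral_mono' measurableSet_Ioo fun u hu => ?_
        gcongr
        exact hN hu.1 ha hu.2.le
    _ ≤ ENNReal.ofReal s *
          ∫⁻ u in Ioi (0 : ℝ), (ENNReal.ofReal u * N u) ^ s / ENNReal.ofReal u := by
        gcongr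
        exact Ioo_subset_Ioi_self

theorem lorentzFunctional_top_le (hN : AntitoneOn N (Ioi 0)) (hq₀ : q ≠ 0) :
    lorentzFunctional ∞ N ≤ q ^ (1 / q.toReal) * lorentzFunctional q N := by
  obtain rfl | hq := eq_or_ne q ∞
  · simp
  have hs : 0 < q.toReal := ENNReal.toReal_pos hq₀ hq
  rw [lorentzFunctional_top, lorentzFunctional, if_neg hq,
    ← ENNReal.mul_rpow_of_nonneg _ _ (one_div_nonneg.2 hs.le)]
  refine iSup₂_le fun a ha => ?_
  rw [one_div, ENNReal.le_rpow_inv_iff hs]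
  simpa only [ENNReal.ofReal_toReal hq] using ofReal_mul_rpow_le_of_antitoneOn hN hs ha

theorem lorentzFunctional_rpow_le_top_rpow_mul (hN : AEMeasurable N (volume.restrict (Ioi 0)))
    (hq₀ : q ≠ 0) (hqr : q ≤ r) (hr : r ≠ ∞) :
    lorentzFunctional r N ^ r.toReal ≤
      lorentzFunctional ∞ N ^ (r.toReal - q.toReal) * lorentzFunctional q N ^ q.toReal := by
  have hq : q ≠ ∞ := ne_top_of_le_ne_top hr hqr
  have hsub : 0 ≤ r.toReal - q.toReal := sub_nonneg.2 (ENNReal.toReal_mono hr hqr)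
  rw [lorentzFunctional_rpow_toReal (ne_bot_of_le_ne_bot hq₀ hqr) hr,
    lorentzFunctional_rpow_toReal hq₀ hq, ← lintegral_const_mul'' _ (by fun_prop)]
  refine setLIntegral_mono' measurableSet_Ioi fun u hu => ?_
  calc (ENNReal.ofReal u * N u) ^ r.toReal / ENNReal.ofReal u
      = (ENNReal.ofReal u * N u) ^ (r.toReal - q.toReal) *
          ((ENNReal.ofReal u * N u) ^ q.toReal / ENNReal.ofReal u) := by
        rw [← mul_div_assoc, ← ENNReal.rpow_add_of_nonneg _ _ hsub ENNReal.toReal_nonneg,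
          sub_add_cancel]
    _ ≤ lorentzFunctional ∞ N ^ (r.toReal - q.toReal) *
          ((ENNReal.ofReal u * N u) ^ q.toReal / ENNReal.ofReal u) := by
        gcongr
        exact ofReal_mul_le_lorentzFunctional_top N hu

theorem lorentzFunctional_le_of_le (hN : AntitoneOn N (Ioi 0)) (hq₀ : q ≠ 0) (hqr : q ≤ r)
    (hr : r ≠ ∞) :
    lorentzFunctional r N ≤
      q ^ ((r.toReal - q.toReal) / (q.toReal * r.toReal)) * lorentzFunctional q N := by
  have hs : 0 < q.toReal := ENNReal.toReal_pos hq₀ (ne_top_of_le_ne_top hr hqr)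
  have hst : q.toReal ≤ r.toReal := ENNReal.toReal_mono hr hqr
  have ht : 0 < r.toReal := hs.trans_le hst
  have hsub : 0 ≤ r.toReal - q.toReal := sub_nonneg.2 hst
  rw [← ENNReal.rpow_le_rpow_iff ht]
  calc lorentzFunctional r N ^ r.toReal
      ≤ lorentzFunctional ∞ N ^ (r.toReal - q.toReal) * lorentzFunctional q N ^ q.toReal :=
        lorentzFunctional_rpow_le_top_rpow_mul
          (aemeasurable_restrict_of_antitoneOn measurableSet_Ioi hN) hq₀ hqr hr
    _ ≤ (q ^ (1 / q.toReal) * lorentzFunctional q N) ^ (r.toReal - q.toReal) *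
          lorentzFunctional q N ^ q.toReal := by
        gcongr
        exact lorentzFunctional_top_le hN hq₀
    _ = q ^ ((r.toReal - q.toReal) / q.toReal) * lorentzFunctional q N ^ r.toReal := by
        rw [ENNReal.mul_rpow_of_nonneg _ _ hsub, mul_assoc,
          ← ENNReal.rpow_add_of_nonneg _ _ hsub hs.le, sub_add_cancel, ← ENNReal.rpow_mul,
          one_div_mul_eq_div]
    _ = (q ^ ((r.toReal - q.toReal) / (q.toReal * r.toReal)) * lorentzFunctional q N) ^
          r.toReal := by
        rw [ENNReal.mul_rpow_of_nonneg _ _ ht.le, ← ENNReal.rpow_mul, div_mul_eq_mul_div,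
          mul_div_mul_right _ _ ht.ne']

end LorentzFunctional

theorem lpNorm1_mono {α : Type} [MeasurableSpace α] (p : ℝ≥0∞) (μ : Measure α) :
    Monotone (lpNorm1 p μ) := by
  intro g h hgh
  unfold lpNorm1
  split_ifs
  · exact essSup_mono_ae (.of_forall hgh)
  · gcongr with x
    exact hgh x

theorem mixedNormE_mono : ∀ {d : ℕ} {α : Fin d → Type} [∀ i, MeasurableSpace (α i)]
    (μ : ∀ i, Measure (α i)) (p : Fin d → ℝ≥0∞), Monotone (mixedNormE μ p)
  | 0, _, _, _, _ => fun _ _ hgh => hgh _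
  | _ + 1, _, _, μ, p => fun _ _ hgh => by
      simp only [mixedNormE]
      exact mixedNormE_mono _ _ fun y => lpNorm1_mono (p 0) (μ 0) fun x => hgh (Fin.cons x y)

section MixedNorm

variable {d : ℕ} {α : Fin d → Type} [∀ i, MeasurableSpace (α i)] (μ : ∀ i, Measure (α i))
  (p : Fin d → ℝ≥0∞)

theorem mixedNorm_indicator_mono :
    Monotone fun A : Set (∀ i, α i) => mixedNorm μ p (A.indicator fun _ => (1 : ℝ)) := by
  intro A B hAB
  refine mixedNormE_mono μ p fun x => ENNReal.ofReal_le_ofReal ?_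
  have nonneg (C : Set (∀ i, α i)) : 0 ≤ C.indicator (fun _ => (1 : ℝ)) x :=
    indicator_nonneg (fun _ _ => zero_le_one) x
  rw [abs_of_nonneg (nonneg A), abs_of_nonneg (nonneg B)]
  exact indicator_le_indicator_of_subset hAB (fun _ => zero_le_one) x

theorem mixedNorm_superlevel_antitone (f : (∀ i, α i) → ℝ) :
    Antitone fun u : ℝ => mixedNorm μ p ({x | u < |f x|}.indicator fun _ => (1 : ℝ)) :=
  fun _ _ huv => mixedNorm_indicator_mono μ p fun _ hx => huv.trans_lt hx

theorem mixedLorentzNorm_eq_lorentzFunctional (q : ℝ≥0∞) (f : (∀ i, α i) → ℝ) :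
    mixedLorentzNorm μ p q f =
      lorentzFunctional q fun u => mixedNorm μ p ({x | u < |f x|}.indicator fun _ => (1 : ℝ)) :=
  rfl

end MixedNorm

theorem statement5_general {N : ℝ → ℝ≥0∞} (hN : AntitoneOn N (Ioi 0)) {q₁ : ℝ≥0∞}
    (hq₁ : q₁ ≠ 0) :
    lorentzFunctional ∞ N ≤ q₁ ^ (1 / q₁.toReal) * lorentzFunctional q₁ N ∧
    ∀ q₂ : ℝ≥0∞, q₁ ≤ q₂ → q₂ ≠ ∞ →
      lorentzFunctional q₂ N ≤
        q₁ ^ ((q₂.toReal - q₁.toReal) / (q₁.toReal * q₂.toReal)) * lorentzFunctional q₁ N :=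
  ⟨lorentzFunctional_top_le hN hq₁, fun _ => lorentzFunctional_le_of_le hN hq₁⟩

/-- Embedding of mixed Lorentz spaces: for `0 < q₁ ≤ q₂ ≤ ∞` one has
`L_{p⃗,q₁} ↪ L_{p⃗,q₂}`; in fact `‖f‖_{L_{p⃗,∞}} ≤ q₁^{1/q₁} ‖f‖_{L_{p⃗,q₁}}`, and if
`q₁ < q₂ < ∞` then `‖f‖_{L_{p⃗,q₂}} ≤ q₁^{(q₂−q₁)/(q₁q₂)} ‖f‖_{L_{p⃗,q₁}}`. -/
theorem statement5 (d : ℕ) (α : Fin d → Type) [∀ i, MeasurableSpace (α i)]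
    (μ : ∀ i, Measure (α i)) [∀ i, SigmaFinite (μ i)]
    (p : Fin d → ℝ≥0∞) (hp : ∀ i, 0 < p i)
    (q₁ q₂ : ℝ≥0∞) (hq₁ : 0 < q₁) (hq₁₂ : q₁ ≤ q₂) :
    (∀ f : (∀ i, α i) → ℝ, Measurable f →
      mixedLorentzNorm μ p ∞ f ≤ q₁ ^ (1 / q₁.toReal) * mixedLorentzNorm μ p q₁ f) ∧
    (q₁ < q₂ → q₂ < ∞ → ∀ f : (∀ i, α i) → ℝ, Measurable f →
      mixedLorentzNorm μ p q₂ f ≤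
        q₁ ^ ((q₂.toReal - q₁.toReal) / (q₁.toReal * q₂.toReal)) *
          mixedLorentzNorm μ p q₁ f) := by
  simp only [mixedLorentzNorm_eq_lorentzFunctional]
  have h f := statement5_general ((mixedNorm_superlevel_antitone μ p f).antitoneOn _) hq₁.ne'
  exact ⟨fun f _ => (h f).1, fun _ htop f _ => (h f).2 q₂ hq₁₂ htop.ne⟩
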